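/- Let G be any subgroup of SL(2,ℂ) of order 120 under which F(x,y) = x·y·(x^10 − 11x^5y^5 − y^10) is invariant (F(A·(x,y)) = F(x,y) for all A ∈ G). Then every homogeneous polynomial P ∈ ℂ[x,y] of degree 60 that is invariant under every element of G is a ℂ-linear combination of F^5 and H^3, where H(x,y) = x^20 + 228x^15y^5 + 494x^10y^10 − 228x^5y^15 + y^20; i.e., the space of degree-60 invariants is two-dimensional, spanned by F^5 and H^3. -/

import Mathlib

open MvPolynomial

/-- Substitution of the linear map given by a 2×2 matrix `A` into a two-variable
polynomial: `G(A·(x,y)) = G(ax+by, cx+dy)`. -/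
noncomputable def subst (A : Matrix (Fin 2) (Fin 2) ℂ) (G : MvPolynomial (Fin 2) ℂ) :
    MvPolynomial (Fin 2) ℂ :=
  aeval (fun i => C (A i 0) * X 0 + C (A i 1) * X 1) G

/-- The matrix of an element of \`SL(2,ℂ)\`. -/
noncomputable def mat (A : Matrix.SpecialLinearGroup (Fin 2) ℂ) : Matrix (Fin 2) (Fin 2) ℂ := A

/-- Klein's degree-12 icosahedral form `F(x,y) = x·y·(x^10 − 11x^5y^5 − y^10)`. -/
noncomputable def F : MvPolynomial (Fin 2) ℂ :=
  X 0 * X 1 * ((X 0) ^ 10 - 11 * (X 0) ^ 5 * (X 1) ^ 5 - (X 1) ^ 10)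

/-- Klein's degree-20 icosahedral form `H`. -/
noncomputable def H : MvPolynomial (Fin 2) ℂ :=
  (X 0) ^ 20 + 228 * (X 0) ^ 15 * (X 1) ^ 5 + 494 * (X 0) ^ 10 * (X 1) ^ 10
    - 228 * (X 0) ^ 5 * (X 1) ^ 15 + (X 1) ^ 20

/-!
A nonzero binary form of degree `n` has at most `n` zeros on the projective line, and the zeros of
a `G`-invariant form are a union of `G`-orbits. All but finitely many points have their stabilizer
in `{1, -1}`, so their orbits have at least `|G| / 2` points. Hence an invariant form of degree `n`
is determined by its values at more than `2 n / |G|` points on distinct generic orbits; for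
`n = 60` and `|G| = 120` the invariants have dimension at most two. Finally `H` is invariant along
with `F` because, up to the factor `-121`, it is the Hessian covariant of `F`.
-/

open Matrix Module MulAction
open scoped LinearAlgebra.Projectivization MatrixGroups

section LinearSubstitution

variable {σ τ R : Type*} [Fintype σ] [CommSemiring R]

theorem pderiv_bind₁ (f : σ → MvPolynomial τ R) (P : MvPolynomial σ R) (i : τ) :
    pderiv i (bind₁ f P) = ∑ j, bind₁ f (pderiv j P) * pderiv i (f j) := by
  classical
  induction P using MvPolynomial.induction_on with
  | C c => simp
  | add p q hp hq => simp only [map_add, hp, hq, add_mul, Finset.sum_add_distrib]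
  | mul_X p k hp =>
    have hX (j : σ) : bind₁ f (pderiv j (p * X k)) * pderiv i (f j) =
        (if j = k then bind₁ f p * pderiv i (f j) else 0) +
          bind₁ f (pderiv j p) * pderiv i (f j) * f k := by
      rcases eq_or_ne j k with rfl | hjk
      · simp only [pderiv_mul, pderiv_X_self, map_add, map_mul, mul_one, bind₁_X_right, if_true]
        ring
      · simp only [pderiv_mul, pderiv_X_of_ne hjk.symm, map_mul, mul_zero, add_zero,
          bind₁_X_right, hjk, if_false, zero_add]
        ring
    simp only [hX, Finset.sum_add_distrib, ← Finset.sum_mul, ← hp, Finset.sum_ite_eq',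
      Finset.mem_univ, if_true]
    simp only [map_mul, bind₁_X_right, pderiv_mul]
    ring

theorem pderiv_toMvPolynomial (A : Matrix τ σ R) (i : σ) (j : τ) :
    pderiv i (A.toMvPolynomial j) = C (A j i) := by
  classical
  simp [toMvPolynomial, ← C_mul_X_eq_monomial, pderiv_X, Pi.single_apply]

theorem eval_bind₁_toMvPolynomial (A : Matrix τ σ R) (P : MvPolynomial τ R) (v : σ → R) :
    eval v (bind₁ A.toMvPolynomial P) = eval (A *ᵥ v) P := by
  have hA : (fun i => eval v (A.toMvPolynomial i)) = A *ᵥ v :=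
    funext fun i => A.toMvPolynomial_eval_eq_apply i v
  rw [← hA]
  exact eval₂Hom_bind₁ (RingHom.id R) v A.toMvPolynomial P

end LinearSubstitution

section Hessian

/-- The matrix of second partial derivatives of a polynomial. -/
noncomputable def hessianMatrix {σ R : Type*} [CommSemiring R] (P : MvPolynomial σ R) :
    Matrix σ σ (MvPolynomial σ R) :=
  .of fun i j => pderiv i (pderiv j P)

theorem hessianMatrix_bind₁_toMvPolynomial {σ R : Type*} [Fintype σ] [CommSemiring R]
    (A : Matrix σ σ R) (P : MvPolynomial σ R) :
    hessianMatrix (bind₁ A.toMvPolynomial P) =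
      (A.map C)ᵀ * (hessianMatrix P).map (bind₁ A.toMvPolynomial) * A.map C := by
  ext1 i j
  simp only [hessianMatrix, of_apply, pderiv_bind₁, pderiv_toMvPolynomial, map_sum, pderiv_mul,
    pderiv_C, mul_zero, add_zero, Matrix.mul_apply, transpose_apply, map_apply]
  refine Finset.sum_congr rfl fun k _ => congrArg (· * C (A k j)) ?_
  exact Finset.sum_congr rfl fun l _ => mul_comm _ _

variable {σ R : Type*} [Fintype σ] [DecidableEq σ] [CommRing R]

/-- The Hessian covariant of a polynomial: the determinant of its Hessian matrix. -/
noncomputable def hessian (P : MvPolynomial σ R) : MvPolynomial σ R :=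
  (hessianMatrix P).det

theorem hessian_bind₁_toMvPolynomial (A : Matrix σ σ R) (P : MvPolynomial σ R) :
    hessian (bind₁ A.toMvPolynomial P) = C (A.det ^ 2) * bind₁ A.toMvPolynomial (hessian P) := by
  have hC : (A.map C).det = (C A.det : MvPolynomial σ R) := (RingHom.map_det C A).symm
  have hbind : ((hessianMatrix P).map (bind₁ A.toMvPolynomial)).det =
      bind₁ A.toMvPolynomial (hessian P) :=
    (AlgHom.map_det (bind₁ A.toMvPolynomial) (hessianMatrix P)).symm
  rw [hessian, hessianMatrix_bind₁_toMvPolynomial, det_mul, det_mul, det_transpose, hC, hbind,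
    map_pow]
  ring

end Hessian

section ProjectiveZeros

theorem eval_smul_of_isHomogeneous {σ R : Type*} [CommSemiring R] {P : MvPolynomial σ R} {n : ℕ}
    (hP : P.IsHomogeneous n) (c : R) (v : σ → R) : eval (c • v) P = c ^ n * eval v P := by
  rw [eval_eq, eval_eq, Finset.mul_sum]
  refine Finset.sum_congr rfl fun d hd => ?_
  rw [hP.degree_eq_sum_deg_support hd]
  simp only [Pi.smul_apply, smul_eq_mul, mul_pow, Finset.prod_mul_distrib,
    Finset.prod_pow_eq_pow_sum]
  ring

variable {K : Type*} [Field K]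

/-- The zeros of a form in projective space. Membership is tested on the chosen representative
of a point, so the notion is meaningful for homogeneous polynomials only. -/
def projectiveZeros {σ : Type*} (P : MvPolynomial σ K) : Set (ℙ K (σ → K)) :=
  {p | eval p.rep P = 0}

theorem mk_mem_projectiveZeros_iff {σ : Type*} {P : MvPolynomial σ K} {n : ℕ}
    (hP : P.IsHomogeneous n) {v : σ → K} (hv : v ≠ 0) :
    Projectivization.mk K v hv ∈ projectiveZeros P ↔ eval v P = 0 := by
  obtain ⟨c, hc⟩ := Projectivization.exists_smul_eq_mk_rep K v hv
  rw [projectiveZeros, Set.mem_ofPred_eq, ← hc, Units.smul_def, eval_smul_of_isHomogeneous hP]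
  simp

/-- The point `(t : 1)` of the projective line. -/
def affinePoint (t : K) : ℙ K (Fin 2 → K) :=
  .mk K ![t, 1] (by simp)

variable (K) in
/-- The point `(1 : 0)` of the projective line. -/
def infinityPoint : ℙ K (Fin 2 → K) :=
  .mk K ![1, 0] (by simp)

theorem eq_infinityPoint_or_exists_eq_affinePoint (p : ℙ K (Fin 2 → K)) :
    p = infinityPoint K ∨ ∃ t, p = affinePoint t := by
  classical
  obtain ⟨x, rfl⟩ := (OnePoint.equivProjectivization K).surjective p
  cases x with
  | infty => exact .inl rfl
  | coe t => exact .inr ⟨t, rfl⟩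

theorem affinePoint_injective : Function.Injective (affinePoint : K → ℙ K (Fin 2 → K)) := by
  classical
  exact (OnePoint.equivProjectivization K).injective.comp OnePoint.coe_injective

theorem eval_homogenize_one_zero {R : Type*} [CommSemiring R] (q : Polynomial R) (n : ℕ) :
    eval ![1, 0] (q.homogenize n) = q.coeff n := by
  rw [Polynomial.homogenize, map_sum, Finset.sum_eq_single (n, 0)]
  · simp [eval_monomial, Finsupp.prod_fintype]
  · rintro ⟨k, l⟩ hkl hne
    have hl : l ≠ 0 := by
      rintro rfl
      simp_all
    simp [eval_monomial, Finsupp.prod_fintype, hl]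
  · simp

theorem exists_homogenize_eq {R : Type*} [CommSemiring R] {P : MvPolynomial (Fin 2) R} {n : ℕ}
    (hP : P.IsHomogeneous n) :
    ∃ q : Polynomial R, q.natDegree ≤ n ∧ q.homogenize n = P := by
  refine ⟨aeval ![Polynomial.X, 1] P, ?_, Polynomial.homogenize_eq_of_isHomogeneous hP rfl⟩
  refine (aeval_natDegree_le P hP.totalDegree_le _ (n := 1) fun i => ?_).trans_eq (mul_one n)
  fin_cases i <;> simp [Polynomial.natDegree_X_le]

theorem finite_projectiveZeros_and_ncard_le {P : MvPolynomial (Fin 2) K} {n : ℕ}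
    (hP : P.IsHomogeneous n) (hP0 : P ≠ 0) :
    (projectiveZeros P).Finite ∧ (projectiveZeros P).ncard ≤ n := by
  classical
  obtain ⟨q, hdeg, rfl⟩ := exists_homogenize_eq hP
  have hq : q ≠ 0 := by
    rintro rfl
    simp at hP0
  have haffine (t : K) : affinePoint t ∈ projectiveZeros (q.homogenize n) ↔ q.IsRoot t := by
    simp [affinePoint, mk_mem_projectiveZeros_iff hP, Polynomial.eval_homogenize hdeg]
  have hinfinity : infinityPoint K ∈ projectiveZeros (q.homogenize n) ↔ q.coeff n = 0 := by
    rw [infinityPoint, mk_mem_projectiveZeros_iff hP, eval_homogenize_one_zero]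
  have hroots : (affinePoint '' q.rootSet K).ncard ≤ q.natDegree :=
    (Set.ncard_image_le (q.rootSet_finite K)).trans (q.ncard_rootSet_le K)
  have hfin : (affinePoint '' q.rootSet K).Finite := (q.rootSet_finite K).image _
  by_cases hn : q.coeff n = 0
  · have hsub : projectiveZeros (q.homogenize n) ⊆
        insert (infinityPoint K) (affinePoint '' q.rootSet K) := fun p hp => by
      obtain rfl | ⟨t, rfl⟩ := eq_infinityPoint_or_exists_eq_affinePoint p
      · exact Set.mem_insert _ _
      · exact .inr ⟨t, by simpa [Polynomial.mem_rootSet, hq] using (haffine t).mp hp, rfl⟩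
    have hlt : q.natDegree < n := hdeg.lt_of_ne fun h => hq (by simpa [← h] using hn)
    exact ⟨(hfin.insert _).subset hsub, (Set.ncard_le_ncard hsub (hfin.insert _)).trans <|
      (Set.ncard_insert_le _ _).trans (by lia)⟩
  · have hsub : projectiveZeros (q.homogenize n) ⊆ affinePoint '' q.rootSet K := fun p hp => by
      obtain rfl | ⟨t, rfl⟩ := eq_infinityPoint_or_exists_eq_affinePoint p
      · exact absurd (hinfinity.mp hp) hn
      · exact ⟨t, by simpa [Polynomial.mem_rootSet, hq] using (haffine t).mp hp, rfl⟩
    exact ⟨hfin.subset hsub, (Set.ncard_le_ncard hsub hfin).trans (hroots.trans hdeg)⟩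

end ProjectiveZeros

section Orbits

variable {G α : Type*} [Group G] [Finite G] [MulAction G α]

theorem exists_finset_card_eq_injOn_orbit {s : Set α} (hs : s.Infinite) (m : ℕ) :
    ∃ t : Finset α, ↑t ⊆ s ∧ t.card = m ∧ Set.InjOn (orbit G) (t : Set α) := by
  classical
  have himage : (orbit G '' s).Infinite := fun hfin => hs <| by
    refine Set.Finite.of_finite_fibers (orbit G) hfin ?_
    rintro _ ⟨a, -, rfl⟩
    exact (Set.finite_range fun g : G => g • a).subset fun b hb => orbit_eq_iff.mp hb.2
  obtain ⟨u, hus, rfl⟩ := himage.exists_subset_card_eq m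
  obtain ⟨t, hts, hinj, rfl⟩ := Finset.exists_subset_injOn_image_eq_of_surjOn s u hus
  exact ⟨t, hts, (Finset.card_image_of_injOn hinj).symm, hinj⟩

theorem card_mul_card_le_mul_ncard_of_orbit_subset {t : Finset α}
    (hinj : Set.InjOn (orbit G) (t : Set α)) {k : ℕ}
    (hstab : ∀ a ∈ t, Nat.card (stabilizer G a) ≤ k) {Z : Set α} (hZ : Z.Finite)
    (hsub : ∀ a ∈ t, orbit G a ⊆ Z) : t.card * Nat.card G ≤ k * Z.ncard := by
  have hdisj : (t : Set α).PairwiseDisjoint (orbit G) := fun a ha b hb hab =>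
    (orbit.eq_or_disjoint a b).resolve_left (hinj.ne ha hb hab)
  have horbitfin (a : α) : (orbit G a).Finite := Set.finite_range _
  have horbit (a : α) (ha : a ∈ t) : Nat.card G ≤ k * (orbit G a).ncard := by
    rw [← (stabilizer G a).card_mul_index, index_stabilizer]
    exact Nat.mul_le_mul_right _ (hstab a ha)
  calc t.card * Nat.card G ≤ ∑ a ∈ t, k * (orbit G a).ncard := by
        simpa using Finset.sum_le_sum horbit
    _ = k * (⋃ a ∈ (t : Set α), orbit G a).ncard := by
        rw [t.finite_toSet.ncard_biUnion (fun a _ => horbitfin a) hdisj,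
          finsum_mem_coe_finset, Finset.mul_sum]
    _ ≤ k * Z.ncard := Nat.mul_le_mul_left _ (Set.ncard_le_ncard (Set.iUnion₂_subset hsub) hZ)

end Orbits

section GenericPoints

variable {K : Type*} [Field K]

theorem eq_one_or_eq_neg_one_of_mem_range_scalar {g : SL(2, K)}
    (hg : (g : Matrix (Fin 2) (Fin 2) K) ∈ Set.range (scalar (Fin 2))) : g = 1 ∨ g = -1 := by
  obtain ⟨r, hr⟩ := hg
  have hdet : r ^ 2 = 1 := by
    have := g.det_coe
    rwa [← hr, scalar_apply, det_diagonal, Finset.prod_const, Finset.card_univ,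
      Fintype.card_fin] at this
  obtain rfl | rfl := sq_eq_one_iff.mp hdet
  · exact .inl (Subtype.ext (hr.symm.trans (map_one _)))
  · exact .inr (Subtype.ext (hr.symm.trans (by rw [map_neg, map_one]; rfl)))

theorem finite_fixedBy_projectiveLine {g : SL(2, K)} (h1 : g ≠ 1) (hneg : g ≠ -1) :
    (fixedBy (ℙ K (Fin 2 → K)) g).Finite := by
  classical
  have hpoly : (g : GL (Fin 2) K).fixpointPolynomial ≠ 0 := fun h =>
    (eq_one_or_eq_neg_one_of_mem_range_scalar
      (GeneralLinearGroup.fixpointPolynomial_eq_zero_iff.mp h)).elim h1 hneg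
  refine (((Polynomial.finite_setOfPred_isRoot hpoly).image affinePoint).insert
    (infinityPoint K)).subset fun p hp => ?_
  obtain rfl | ⟨t, rfl⟩ := eq_infinityPoint_or_exists_eq_affinePoint p
  · exact Set.mem_insert _ _
  · refine Set.mem_insert_of_mem _ ⟨t, ?_, rfl⟩
    have hfix : (g : GL (Fin 2) K) • (t : OnePoint K) = t :=
      (OnePoint.equivProjectivization K).injective <|
        (OnePoint.equivProjectivization_smul _).trans hp
    simpa using GeneralLinearGroup.fixpointPolynomial_aeval_eq_zero_iff.mpr hfix

theorem infinite_setOf_card_stabilizer_le_two [Infinite K] (G : Subgroup SL(2, K)) [Finite G] :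
    {p : ℙ K (Fin 2 → K) | Nat.card (stabilizer G p) ≤ 2}.Infinite := by
  have hinf : Infinite (ℙ K (Fin 2 → K)) := .of_injective _ affinePoint_injective
  have hfixed : (⋃ g ∈ {g : G | (g : SL(2, K)) ≠ 1 ∧ (g : SL(2, K)) ≠ -1},
      fixedBy (ℙ K (Fin 2 → K)) (g : SL(2, K))).Finite :=
    (Set.toFinite _).biUnion fun g hg => finite_fixedBy_projectiveLine hg.1 hg.2
  refine hfixed.infinite_compl.mono fun p hp => ?_
  have hstab : Set.range (fun g : stabilizer G p => ((g : G) : SL(2, K))) ⊆ {1, -1} := by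
    rintro _ ⟨⟨g, hg⟩, rfl⟩
    by_contra hne
    simp only [Set.mem_insert_iff, Set.mem_singleton_iff, not_or] at hne
    exact hp (Set.mem_biUnion hne hg)
  have hinj : Function.Injective fun g : stabilizer G p => ((g : G) : SL(2, K)) :=
    Subtype.val_injective.comp Subtype.val_injective
  calc Nat.card (stabilizer G p)
    _ = (Set.range fun g : stabilizer G p => ((g : G) : SL(2, K))).ncard := by
        rw [← Set.image_univ, Set.ncard_image_of_injective _ hinj, Set.ncard_univ]
    _ ≤ ({1, -1} : Set SL(2, K)).ncard := Set.ncard_le_ncard hstab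
    _ ≤ 2 := (Set.ncard_insert_le _ _).trans_eq (by rw [Set.ncard_singleton])

end GenericPoints

section InvariantForms

/-- The forms of degree `n` invariant under the linear substitutions from a group `G`. -/
noncomputable def invariantForms {σ K : Type*} [Fintype σ] [DecidableEq σ] [CommRing K]
    (G : Subgroup (SpecialLinearGroup σ K)) (n : ℕ) : Submodule K (MvPolynomial σ K) where
  carrier := {P | P.IsHomogeneous n ∧ ∀ g ∈ G, bind₁ (g : Matrix σ σ K).toMvPolynomial P = P}
  zero_mem' := ⟨isHomogeneous_zero _ _ _, fun _ _ => map_zero _⟩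
  add_mem' hP hQ := ⟨hP.1.add hQ.1, fun g hg => by rw [map_add, hP.2 g hg, hQ.2 g hg]⟩
  smul_mem' c P hP := ⟨(homogeneousSubmodule σ K n).smul_mem c hP.1,
    fun g hg => by rw [map_smul, hP.2 g hg]⟩

theorem pow_mem_invariantForms {σ K : Type*} [Fintype σ] [DecidableEq σ] [CommRing K]
    {G : Subgroup (SpecialLinearGroup σ K)} {n : ℕ} {P : MvPolynomial σ K}
    (hP : P ∈ invariantForms G n) (k : ℕ) : P ^ k ∈ invariantForms G (n * k) :=
  ⟨hP.1.pow k, fun g hg => by rw [map_pow, hP.2 g hg]⟩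

theorem smul_mem_projectiveZeros {σ K : Type*} [Fintype σ] [DecidableEq σ] [Field K]
    {G : Subgroup (SpecialLinearGroup σ K)} {n : ℕ} {P : MvPolynomial σ K}
    (hP : P ∈ invariantForms G n) {g : G} {p : ℙ K (σ → K)} (hp : p ∈ projectiveZeros P) :
    g • p ∈ projectiveZeros P := by
  have heval := eval_bind₁_toMvPolynomial ((g : SpecialLinearGroup σ K) : Matrix σ σ K) P p.rep
  rw [hP.2 g g.2, hp] at heval
  rw [← p.mk_rep, Subgroup.smul_def, Projectivization.smul_mk]
  exact (mk_mem_projectiveZeros_iff hP.1 _).mpr heval.symm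

variable {K : Type*} [Field K] {G : Subgroup SL(2, K)} [Finite G] {n : ℕ}

theorem eq_zero_of_forall_eval_rep_eq_zero {P : MvPolynomial (Fin 2) K}
    (hP : P ∈ invariantForms G n)
    {t : Finset (ℙ K (Fin 2 → K))} (hinj : Set.InjOn (orbit G) (t : Set (ℙ K (Fin 2 → K))))
    {k : ℕ} (hstab : ∀ p ∈ t, Nat.card (stabilizer G p) ≤ k) (hcard : k * n < t.card * Nat.card G)
    (hzero : ∀ p ∈ t, eval p.rep P = 0) : P = 0 := by
  by_contra hP0
  obtain ⟨hfin, hncard⟩ := finite_projectiveZeros_and_ncard_le hP.1 hP0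
  have hle := card_mul_card_le_mul_ncard_of_orbit_subset hinj hstab hfin fun p hp => by
    rintro _ ⟨g, rfl⟩
    exact smul_mem_projectiveZeros hP (hzero p hp)
  exact hcard.not_ge (hle.trans (Nat.mul_le_mul_left k hncard))

theorem rank_invariantForms_le [Infinite K] (G : Subgroup SL(2, K)) [Finite G] (n : ℕ) :
    Module.rank K (invariantForms G n) ≤ (2 * n / Nat.card G + 1 : ℕ) := by
  obtain ⟨t, hstab, hcard, hinj⟩ := exists_finset_card_eq_injOn_orbit (G := G)
    (infinite_setOf_card_stabilizer_le_two G) (2 * n / Nat.card G + 1)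
  let evalAt : invariantForms G n →ₗ[K] t → K :=
    LinearMap.pi fun p => (aeval p.1.rep).toLinearMap ∘ₗ (invariantForms G n).subtype
  have hevalAt : Function.Injective evalAt := by
    refine (injective_iff_map_eq_zero evalAt).mpr fun P hP => Subtype.ext ?_
    refine eq_zero_of_forall_eval_rep_eq_zero P.2 hinj hstab ?_ fun p hp => congrFun hP ⟨p, hp⟩
    rw [hcard, mul_comm _ (Nat.card G)]
    exact Nat.lt_mul_div_succ _ Nat.card_pos
  calc Module.rank K (invariantForms G n) ≤ Module.rank K (t → K) :=
        evalAt.rank_le_of_injective hevalAt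
    _ = (2 * n / Nat.card G + 1 : ℕ) := by simp [hcard]

theorem invariantForms_eq_span_pair [Infinite K] (hn : n < Nat.card G)
    {P Q : MvPolynomial (Fin 2) K} (hP : P ∈ invariantForms G n) (hQ : Q ∈ invariantForms G n)
    (hPQ : LinearIndependent K ![P, Q]) : invariantForms G n = Submodule.span K {P, Q} := by
  have hrank : Module.rank K (invariantForms G n) ≤ (2 : ℕ) := by
    refine (rank_invariantForms_le G n).trans (Nat.cast_le.mpr (Nat.succ_le_succ ?_))
    exact Nat.lt_succ_iff.mp (Nat.div_lt_of_lt_mul (by lia))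
  have : Module.Finite K (invariantForms G n) :=
    Module.rank_lt_aleph0_iff.mp (hrank.trans_lt (Cardinal.natCast_lt_aleph0))
  refine (Submodule.eq_of_le_of_finrank_le ?_ ?_).symm
  · exact Submodule.span_le.mpr (Set.pair_subset hP hQ)
  · have hspan := finrank_span_eq_card hPQ
    rw [Matrix.range_cons_cons_empty, Fintype.card_fin] at hspan
    exact (finrank_le_of_rank_le hrank).trans_eq hspan.symm

end InvariantForms

section Klein

theorem subst_eq_bind₁ (A : Matrix (Fin 2) (Fin 2) ℂ) (P : MvPolynomial (Fin 2) ℂ) :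
    subst A P = bind₁ A.toMvPolynomial P := by
  have : A.toMvPolynomial = fun i => C (A i 0) * X 0 + C (A i 1) * X 1 := by
    funext i
    simp only [toMvPolynomial, Fin.sum_univ_two, C_mul_X_eq_monomial]
  rw [subst, this, aeval_eq_bind₁]

theorem isHomogeneous_X_pow_mul_X_pow {σ R : Type*} [CommSemiring R] (i j : σ) (a b : ℕ) :
    (X i ^ a * X j ^ b : MvPolynomial σ R).IsHomogeneous (a + b) :=
  (isHomogeneous_X_pow i a).mul (isHomogeneous_X_pow j b)

theorem F_eq : F = X 0 ^ 11 * X 1 ^ 1 - C 11 * (X 0 ^ 6 * X 1 ^ 6) - X 0 ^ 1 * X 1 ^ 11 := by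
  rw [F, map_ofNat]
  ring

theorem H_eq : H = X 0 ^ 20 * X 1 ^ 0 + C 228 * (X 0 ^ 15 * X 1 ^ 5) +
    C 494 * (X 0 ^ 10 * X 1 ^ 10) - C 228 * (X 0 ^ 5 * X 1 ^ 15) + X 0 ^ 0 * X 1 ^ 20 := by
  rw [H, map_ofNat, map_ofNat]
  ring

theorem isHomogeneous_F : F.IsHomogeneous 12 := by
  have hm := isHomogeneous_X_pow_mul_X_pow (R := ℂ) (0 : Fin 2) 1
  rw [F_eq]
  exact ((hm 11 1).sub ((hm 6 6).C_mul 11)).sub (hm 1 11)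

theorem isHomogeneous_H : H.IsHomogeneous 20 := by
  have hm := isHomogeneous_X_pow_mul_X_pow (R := ℂ) (0 : Fin 2) 1
  rw [H_eq]
  exact ((((hm 20 0).add ((hm 15 5).C_mul 228)).add ((hm 10 10).C_mul 494)).sub
    ((hm 5 15).C_mul 228)).add (hm 0 20)

theorem hessian_F : hessian F = C (-121) * H := by
  have hx (a b : ℕ) : pderiv 0 (X 0 ^ a * X 1 ^ b : MvPolynomial (Fin 2) ℂ) =
      a • (X 0 ^ (a - 1) * X 1 ^ b) := by
    rw [pderiv_mul, pderiv_pow, pderiv_pow, pderiv_X_self, pderiv_X_of_ne one_ne_zero, nsmul_eq_mul]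
    ring
  have hy (a b : ℕ) : pderiv 1 (X 0 ^ a * X 1 ^ b : MvPolynomial (Fin 2) ℂ) =
      b • (X 0 ^ a * X 1 ^ (b - 1)) := by
    rw [pderiv_mul, pderiv_pow, pderiv_pow, pderiv_X_self, pderiv_X_of_ne zero_ne_one, nsmul_eq_mul]
    ring
  rw [hessian, det_fin_two]
  simp only [hessianMatrix, of_apply, F_eq, map_sub, pderiv_C_mul, map_nsmul, hx, hy]
  simp only [H, map_neg, map_ofNat, nsmul_eq_mul]
  push_cast
  ring

theorem bind₁_H_eq_self {A : Matrix (Fin 2) (Fin 2) ℂ} (hdet : A.det = 1)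
    (hF : bind₁ A.toMvPolynomial F = F) : bind₁ A.toMvPolynomial H = H := by
  have hcov := hessian_bind₁_toMvPolynomial A F
  rw [hF, hdet, hessian_F, one_pow, C_1, one_mul, map_mul, algHom_C, algebraMap_eq] at hcov
  exact (mul_left_cancel₀ (C_ne_zero.mpr (by norm_num)) hcov).symm

theorem linearIndependent_F_pow_five_H_pow_three : LinearIndependent ℂ ![F ^ 5, H ^ 3] := by
  refine LinearIndependent.pair_iff.mpr fun a b hab => ?_
  have hb : b = 0 := by simpa [F, H] using congrArg (eval ![1, 0]) hab
  have ha : a = 0 := by simpa [F, hb] using congrArg (eval ![1, 1]) hab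
  exact ⟨ha, hb⟩

end Klein

/-- For any order-120 subgroup `G` of `SL(2,ℂ)` leaving `F` invariant (the binary
icosahedral group), every `G`-invariant homogeneous polynomial of degree 60 is a
`ℂ`-linear combination of `F^5` and `H^3`. -/
theorem degree_60_invariants_spanned_by_F5_H3
    (G : Subgroup (Matrix.SpecialLinearGroup (Fin 2) ℂ)) (hcard : Nat.card G = 120)
    (hF : ∀ A ∈ G, subst (mat A) F = F)
    (P : MvPolynomial (Fin 2) ℂ) (hdeg : P.IsHomogeneous 60)
    (hP : ∀ A ∈ G, subst (mat A) P = P) :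
    ∃ a b : ℂ, P = C a * F ^ 5 + C b * H ^ 3 := by
  simp only [subst_eq_bind₁, mat] at hF hP
  have : Finite G := Nat.finite_of_card_ne_zero (by lia)
  have hFG : F ∈ invariantForms G 12 := ⟨isHomogeneous_F, hF⟩
  have hHG : H ∈ invariantForms G 20 :=
    ⟨isHomogeneous_H, fun A hA => bind₁_H_eq_self A.det_coe (hF A hA)⟩
  have hPG : P ∈ invariantForms G 60 := ⟨hdeg, hP⟩
  rw [invariantForms_eq_span_pair (by lia) (pow_mem_invariantForms hFG 5)
    (pow_mem_invariantForms hHG 3) linearIndependent_F_pow_five_H_pow_three,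
    Submodule.mem_span_pair] at hPG
  obtain ⟨a, b, rfl⟩ := hPG
  exact ⟨a, b, by simp only [smul_eq_C_mul]⟩
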